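/- arXiv:1602.05973 — 12 statements merged into one kernel-verified Lean document; each statement's English description precedes it below -/
import Mathlib

section
/- Let n ≥ 1 and fix t ∈ (ZMod 2)^n. Define g : (ZMod 2)^n → ℝ by g(x) = 2^{-n} · Σ_{y ∈ t^⊥} (-1)^{x·y}, where t^⊥ = {y ∈ (ZMod 2)^n : y·t = 0}. Then for every x ∈ (ZMod 2)^n, g(x) = (1/2)·(δ_{x,0} + δ_{x,t}), where δ_{a,b} equals 1 if a = b and 0 otherwise. -/
/-!
For a primitive additive character `ψ` of a finite commutative ring, the indicator of `y · t = 0` is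
the average of `ψ (-r (y · t))` over all `r`, so the sum of `ψ (x · y)` over `t^⊥` is an average of
complete character sums `∑ y, ψ ((x - r t) · y)`, which vanish unless `x = r t`. Over `ZMod 2` the
multiples of `t` are `0` and `t`.
-/

theorem addChar_map_sum_eq_prod {ι A M : Type*} [AddCommMonoid A] [CommMonoid M] (ψ : AddChar A M)
    (s : Finset ι) (f : ι → A) : ψ (∑ i ∈ s, f i) = ∏ i ∈ s, ψ (f i) :=
  map_prod ψ.toMonoidHom (fun i => Multiplicative.ofAdd (f i)) s

section PrimitiveAddChar

variable {R K ι : Type*} [CommRing R] [Fintype R] [DecidableEq R] [Fintype ι]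
  [DecidableEq ι]

theorem sum_addChar_dotProduct [CommRing K] [IsDomain K] {ψ : AddChar R K}
    (hψ : ψ.IsPrimitive) (x : ι → R) :
    ∑ y : ι → R, ψ (x ⬝ᵥ y) = if x = 0 then (Fintype.card R : K) ^ Fintype.card ι else 0 :=
  calc ∑ y : ι → R, ψ (x ⬝ᵥ y)
    _ = ∑ y : ι → R, ∏ i, ψ (y i * x i) := by
      simp only [dotProduct, addChar_map_sum_eq_prod, mul_comm (x _)]
    _ = ∏ i, ∑ a, ψ (a * x i) := (Fintype.prod_sum fun i a => ψ (a * x i)).symm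
    _ = ∏ i, if x i = 0 then (Fintype.card R : K) else 0 := by
      simp only [AddChar.sum_mulShift _ hψ, Nat.cast_ite, Nat.cast_zero]
    _ = if x = 0 then (Fintype.card R : K) ^ Fintype.card ι else 0 := by
      simp [Finset.prod_ite_zero, funext_iff]

theorem card_mul_sum_addChar_orthogonal [CommRing K] [IsDomain K] {ψ : AddChar R K}
    (hψ : ψ.IsPrimitive) (t x : ι → R) :
    Fintype.card R * ∑ y with y ⬝ᵥ t = 0, ψ (x ⬝ᵥ y)
      = (Fintype.card R : K) ^ Fintype.card ι * ∑ r : R, if x = r • t then 1 else 0 := by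
  have indicator (y : ι → R) :
      ∑ r : R, ψ (r * -(y ⬝ᵥ t)) = if y ⬝ᵥ t = 0 then (Fintype.card R : K) else 0 := by
    simp only [AddChar.sum_mulShift _ hψ, neg_eq_zero, Nat.cast_ite, Nat.cast_zero]
  have translate (r : R) (y : ι → R) :
      ψ (r * -(y ⬝ᵥ t)) * ψ (x ⬝ᵥ y) = ψ ((x - r • t) ⬝ᵥ y) := by
    rw [← AddChar.map_add_eq_mul, sub_dotProduct, smul_dotProduct, dotProduct_comm t, smul_eq_mul,
      mul_neg, neg_add_eq_sub]
  calc Fintype.card R * ∑ y with y ⬝ᵥ t = 0, ψ (x ⬝ᵥ y)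
    _ = ∑ y, (∑ r : R, ψ (r * -(y ⬝ᵥ t))) * ψ (x ⬝ᵥ y) := by
      simp only [indicator, Finset.mul_sum, Finset.sum_filter, ite_mul, zero_mul, mul_ite, mul_zero]
    _ = ∑ r : R, ∑ y, ψ ((x - r • t) ⬝ᵥ y) := by
      simp only [Finset.sum_mul, translate]
      exact Finset.sum_comm
    _ = (Fintype.card R : K) ^ Fintype.card ι * ∑ r : R, if x = r • t then 1 else 0 := by
      simp only [sum_addChar_dotProduct hψ, sub_eq_zero, Finset.mul_sum, mul_ite, mul_one, mul_zero]

theorem simon_lemma_sum_general [Field K] [CharZero K] {ψ : AddChar R K}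
    (hψ : ψ.IsPrimitive) (t x : ι → R) :
    ((Fintype.card R : K) ^ Fintype.card ι)⁻¹ * ∑ y with y ⬝ᵥ t = 0, ψ (x ⬝ᵥ y)
      = (1 / Fintype.card R) * ∑ r : R, if x = r • t then 1 else 0 := by
  have card_ne_zero : (Fintype.card R : K) ≠ 0 := Nat.cast_ne_zero.mpr Fintype.card_ne_zero
  field_simp
  rw [mul_comm, card_mul_sum_addChar_orthogonal hψ]

end PrimitiveAddChar

theorem sum_zmod_two {M : Type*} [AddCommMonoid M] (f : ZMod 2 → M) : ∑ r, f r = f 0 + f 1 :=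
  Fin.sum_univ_two f

theorem zmodChar_two_neg_one_apply {K : Type*} [CommRing K] (a : ZMod 2) :
    AddChar.zmodChar 2 (neg_one_sq (R := K)) a = if a = 0 then 1 else -1 := by
  rw [AddChar.zmodChar_apply]
  fin_cases a
  · exact pow_zero _
  · exact pow_one _

theorem zmodChar_two_neg_one_isPrimitive {K : Type*} [CommRing K] [Nontrivial K] (p : ℕ)
    [CharP K p] (hp : p ≠ 2) :
    (AddChar.zmodChar 2 (neg_one_sq (R := K))).IsPrimitive :=
  AddChar.zmodChar_primitive_of_primitive_root 2 (IsPrimitiveRoot.neg_one p hp)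

/-- For `t ∈ (ZMod 2)^n`, the function
`g(x) = 2^{-n} · Σ_{y ∈ t^⊥} (-1)^{x·y}` satisfies
`g(x) = (1/2)·(δ_{x,0} + δ_{x,t})`. -/
theorem simon_lemma_sum (n : ℕ) (hn : 1 ≤ n) (t : Fin n → ZMod 2)
    (x : Fin n → ZMod 2) :
    ((2 : ℝ) ^ n)⁻¹ *
      ∑ y ∈ Finset.univ.filter (fun y : Fin n → ZMod 2 => (∑ i, y i * t i) = 0),
        (if (∑ i, x i * y i : ZMod 2) = 0 then (1 : ℝ) else -1)
    = (1 / 2) * ((if x = 0 then (1 : ℝ) else 0) + (if x = t then (1 : ℝ) else 0)) := by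
  have general :=
    simon_lemma_sum_general (zmodChar_two_neg_one_isPrimitive (K := ℝ) 0 two_ne_zero.symm) t x
  simp only [zmodChar_two_neg_one_apply, ZMod.card, Fintype.card_fin, Nat.cast_ofNat,
    sum_zmod_two, zero_smul, one_smul] at general
  exact general
end

section
/- (Simon's algorithm with approximate promise, probabilistic core.) Let n ≥ 1, c ≥ 1 and m = c·n. Let s ∈ (ZMod 2)^n with s ≠ 0, let p₀ ∈ ℝ with 0 ≤ p₀ < 1, and let μ be a probability measure (PMF) on (ZMod 2)^n such that μ({u : u·s = 0}) = 1 and such that for every t ∈ (ZMod 2)^n with t ∉ {0, s}, μ({u : u·t = 0}) ≤ (1 + p₀)/2. Let u₁, …, u_m be drawn i.i.d. from μ (i.e., consider the m-fold product measure). Then the probability that the linear span of {u₁, …, u_m} equals s^⊥ = {t : t·s = 0} (in which case s is recovered unambiguously by linear algebra) is at least 1 − (2·((1 + p₀)/2)^c)^n. -/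
open MeasureTheory

/-!
A family of vectors in a subspace `W` fails to span `W` exactly when some linear functional that
does not vanish on `W` kills the whole family. For independent samples a functional `f` kills all
`m` of them with probability `μ (ker f) ^ m`, and a union bound over the functionals finishes the
proof. On `K ^ n` there are `|K| ^ n` functionals, all of the form `· ⬝ᵥ t`, and those with
`t ∈ span {s}` vanish on `s^⊥`.
-/

open Module Set Submodule
open scoped ENNReal

section VectorSpace

variable {K V κ : Type*} [Field K] [AddCommGroup V] [Module K V]

theorem exists_dual_le_ker_of_not_le {U W : Submodule K V} (h : ¬W ≤ U) :
    ∃ f : Dual K V, U ≤ f.ker ∧ ¬W ≤ f.ker := by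
  obtain ⟨w, hwW, hwU⟩ := SetLike.not_le_iff_exists.1 h
  obtain ⟨f, hfw, hUf⟩ := U.exists_le_ker_of_notMem hwU
  exact ⟨f, hUf, fun hWf ↦ hfw (hWf hwW)⟩

theorem univ_pi_subset_span_range_eq_union_iUnion_ker (W : Submodule K V) :
    univ.pi (fun _ : κ ↦ (W : Set V)) ⊆
      {v | span K (range v) = W} ∪
        ⋃ f : {f : Dual K V // ¬W ≤ f.ker}, univ.pi fun _ ↦ (f.1.ker : Set V) := by
  intro v hv
  have span_le_W : span K (range v) ≤ W := span_le.2 (range_subset_iff.2 fun i ↦ hv i trivial)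
  by_cases W_le_span : W ≤ span K (range v)
  · exact .inl (span_le_W.antisymm W_le_span)
  · obtain ⟨f, span_le_ker, hf⟩ := exists_dual_le_ker_of_not_le W_le_span
    exact .inr <| mem_iUnion.2
      ⟨⟨f, hf⟩, fun i _ ↦ span_le_ker (subset_span (mem_range_self i))⟩

variable [Fintype κ] [MeasurableSpace V] (μ : Measure V) [SigmaFinite μ]

theorem measure_pow_le_pi_span_range_eq_add_tsum [Countable (Dual K V)] (W : Submodule K V) :
    μ W ^ Fintype.card κ ≤
      Measure.pi (fun _ : κ ↦ μ) {v | span K (range v) = W} +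
        ∑' f : {f : Dual K V // ¬W ≤ f.ker}, μ f.1.ker ^ Fintype.card κ := by
  have pi_univ_pi (S : Set V) :
      Measure.pi (fun _ : κ ↦ μ) (univ.pi fun _ ↦ S) = μ S ^ Fintype.card κ := by
    simp [Measure.pi_pi]
  simp only [← pi_univ_pi]
  exact (measure_mono (univ_pi_subset_span_range_eq_union_iUnion_ker W)).trans <|
    (measure_union_le _ _).trans <| add_le_add_right (measure_iUnion_le _) _

theorem measure_pow_sub_card_dual_mul_pow_le_pi_span_range_eq [Finite (Dual K V)]
    (W : Submodule K V) {r : ℝ≥0∞} (hr : ∀ f : Dual K V, ¬W ≤ f.ker → μ f.ker ≤ r) :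
    μ W ^ Fintype.card κ - Nat.card (Dual K V) * r ^ Fintype.card κ ≤
      Measure.pi (fun _ : κ ↦ μ) {v | span K (range v) = W} := by
  have tsum_le : ∑' f : {f : Dual K V // ¬W ≤ f.ker}, μ f.1.ker ^ Fintype.card κ ≤
      Nat.card (Dual K V) * r ^ Fintype.card κ := calc
    _ ≤ ∑' _ : {f : Dual K V // ¬W ≤ f.ker}, r ^ Fintype.card κ := by
      gcongr with f
      exact hr f.1 f.2
    _ = Nat.card {f : Dual K V // ¬W ≤ f.ker} * r ^ Fintype.card κ := by
      rw [ENNReal.tsum_const, ENat.card_eq_coe_natCard, ENat.toENNReal_coe]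
    _ ≤ Nat.card (Dual K V) * r ^ Fintype.card κ := by
      gcongr
      exact Finite.card_subtype_le _
  exact tsub_le_iff_right.2 <|
    (measure_pow_le_pi_span_range_eq_add_tsum μ W).trans (add_le_add_right tsum_le _)

end VectorSpace

section DotProduct

variable {K ι : Type*} [Field K] [Fintype ι]

theorem coe_ker_dotProductEquiv [DecidableEq ι] (s : ι → K) :
    ((dotProductEquiv K ι s).ker : Set (ι → K)) = {u | u ⬝ᵥ s = 0} := by
  ext u
  simp [dotProduct_comm]

theorem ker_dotProductEquiv_le_of_mem_span_singleton [DecidableEq ι] {s t : ι → K}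
    (ht : t ∈ span K {s}) : (dotProductEquiv K ι s).ker ≤ (dotProductEquiv K ι t).ker := by
  obtain ⟨a, rfl⟩ := mem_span_singleton.1 ht
  intro u hu
  simp_all

theorem simon_approximate_promise_general [Finite K] {κ : Type*} [Fintype κ]
    [MeasurableSpace (ι → K)] (μ : Measure (ι → K)) [SigmaFinite μ] (s : ι → K) {r : ℝ≥0∞}
    (hr : ∀ t ∉ span K {s}, μ {u | u ⬝ᵥ t = 0} ≤ r) :
    μ {u | u ⬝ᵥ s = 0} ^ Fintype.card κ -
        Nat.card K ^ Fintype.card ι * r ^ Fintype.card κ ≤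
      Measure.pi (fun _ : κ ↦ μ) {v | (span K (range v) : Set (ι → K)) = {t | t ⬝ᵥ s = 0}} := by
  classical
  have : Finite (Dual K (ι → K)) := .of_equiv _ (dotProductEquiv K ι).toEquiv
  have card_dual : Nat.card (Dual K (ι → K)) = Nat.card K ^ Fintype.card ι := by
    rw [← Nat.card_congr (dotProductEquiv K ι).toEquiv, Nat.card_fun,
      Nat.card_eq_fintype_card (α := ι)]
  simp only [← coe_ker_dotProductEquiv, SetLike.coe_set_eq] at hr ⊢
  rw [← Nat.cast_pow, ← card_dual]
  refine measure_pow_sub_card_dual_mul_pow_le_pi_span_range_eq μ _ fun f hf ↦ ?_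
  obtain ⟨t, rfl⟩ := (dotProductEquiv K ι).surjective f
  exact hr t fun ht ↦ hf (ker_dotProductEquiv_le_of_mem_span_singleton ht)

end DotProduct

theorem ofReal_one_sub_two_mul_pow_pow {q : ℝ} (hq : 0 ≤ q) (c n : ℕ) :
    ENNReal.ofReal (1 - (2 * q ^ c) ^ n) = 1 - 2 ^ n * ENNReal.ofReal q ^ (c * n) := by
  rw [ENNReal.ofReal_sub _ (by positivity), mul_pow, ← pow_mul,
    ENNReal.ofReal_mul (by positivity), ENNReal.ofReal_pow zero_le_two, ENNReal.ofReal_pow hq]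
  simp

/-- Simon's algorithm with approximate promise, probabilistic core:
if `μ` is supported on `s^⊥` and gives mass at most `(1+p₀)/2` to every hyperplane
`t^⊥` with `t ∉ {0, s}`, then `m = c·n` i.i.d. samples from `μ` span `s^⊥` with
probability at least `1 − (2·((1+p₀)/2)^c)^n`. -/
theorem simon_approximate_promise (n c : ℕ) (hn : 1 ≤ n) (hc : 1 ≤ c)
    (m : ℕ) (hm : m = c * n)
    (s : Fin n → ZMod 2) (hs : s ≠ 0)
    (p₀ : ℝ) (hp₀ : 0 ≤ p₀) (hp₁ : p₀ < 1)
    (μ : PMF (Fin n → ZMod 2))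
    (hsupp : μ.toMeasure {u : Fin n → ZMod 2 | (∑ i, u i * s i) = 0} = 1)
    (hhyp : ∀ t : Fin n → ZMod 2, t ≠ 0 → t ≠ s →
      μ.toMeasure {u : Fin n → ZMod 2 | (∑ i, u i * t i) = 0}
        ≤ ENNReal.ofReal ((1 + p₀) / 2)) :
    ENNReal.ofReal (1 - (2 * ((1 + p₀) / 2) ^ c) ^ n)
      ≤ Measure.pi (fun _ : Fin m => μ.toMeasure)
          {v : Fin m → (Fin n → ZMod 2) |
            (Submodule.span (ZMod 2) (Set.range v) : Set (Fin n → ZMod 2))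
              = {t : Fin n → ZMod 2 | (∑ i, t i * s i) = 0}} := by
  simpa [hm, hsupp, dotProduct, ofReal_one_sub_two_mul_pow_pow (by positivity : 0 ≤ (1 + p₀) / 2)]
    using simon_approximate_promise_general (κ := Fin m) μ.toMeasure s fun t ht ↦
      hhyp t (fun h ↦ ht (by simp [h])) (fun h ↦ ht (by simp [h]))
end

section
/- (Simon's algorithm without promise, probabilistic core.) Let n ≥ 1, c ≥ 1 and m = c·n. Let A be a type, f : (ZMod 2)^n → A a function, and for each t ∈ (ZMod 2)^n set p_t = |{x : f(x + t) = f(x)}| / 2^n. Let p₀ ∈ ℝ with 0 ≤ p₀ ≤ 1, and let μ be a probability measure (PMF) on (ZMod 2)^n such that for every t ∈ (ZMod 2)^n, μ({u : u·t = 0}) = (1 + p_t)/2. Let u₁, …, u_m be drawn i.i.d. from μ. Then the probability that there exists t ∈ (ZMod 2)^n with p_t < p₀ and u_i·t = 0 for all i = 1, …, m is at most 2^n · ((1 + p₀)/2)^{c·n}. -/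
/-!
A fixed `t` with `p_t < p₀` is orthogonal to all `m` independent samples with probability
`((1 + p_t) / 2) ^ m ≤ ((1 + p₀) / 2) ^ m`, and there are at most `2 ^ n` such `t`, so a union
bound gives the estimate.
-/

open MeasureTheory

section UnionBound

variable {ι T : Type*} [Fintype ι]

theorem measure_pi_exists_forall_mem_le_sum_prod {α : ι → Type*} [∀ i, MeasurableSpace (α i)]
    (μ : ∀ i, Measure (α i)) [∀ i, SigmaFinite (μ i)] (S : Finset T) (E : T → ∀ i, Set (α i)) :
    Measure.pi μ {v | ∃ t ∈ S, ∀ i, v i ∈ E t i} ≤ ∑ t ∈ S, ∏ i, μ i (E t i) := by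
  have event_eq : {v : ∀ i, α i | ∃ t ∈ S, ∀ i, v i ∈ E t i} = ⋃ t ∈ S, Set.univ.pi (E t) := by
    ext v
    simp
  calc Measure.pi μ {v | ∃ t ∈ S, ∀ i, v i ∈ E t i}
      ≤ ∑ t ∈ S, Measure.pi μ (Set.univ.pi (E t)) := event_eq ▸ measure_biUnion_finset_le _ _
    _ = ∑ t ∈ S, ∏ i, μ i (E t i) := by simp only [Measure.pi_pi]

theorem measure_pi_exists_forall_mem_le_card_mul_pow {α : Type*} [MeasurableSpace α]
    (μ : Measure α) [SigmaFinite μ] (S : Finset T) (E : T → Set α) {q : ENNReal}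
    (hq : ∀ t ∈ S, μ (E t) ≤ q) :
    Measure.pi (fun _ : ι => μ) {v | ∃ t ∈ S, ∀ i, v i ∈ E t} ≤
      S.card * q ^ Fintype.card ι := by
  calc Measure.pi (fun _ : ι => μ) {v | ∃ t ∈ S, ∀ i, v i ∈ E t}
      ≤ ∑ t ∈ S, ∏ _i : ι, μ (E t) :=
        measure_pi_exists_forall_mem_le_sum_prod (fun _ => μ) S fun t _ => E t
    _ = ∑ t ∈ S, μ (E t) ^ Fintype.card ι := by simp only [Finset.prod_const, Finset.card_univ]
    _ ≤ S.card • q ^ Fintype.card ι :=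
        Finset.sum_le_card_nsmul _ _ _ fun t ht => pow_le_pow_left' (hq t ht) _
    _ = S.card * q ^ Fintype.card ι := nsmul_eq_mul _ _

end UnionBound

section ShiftCollision

variable {G A : Type*} [Fintype G] [Add G]

open scoped Classical in
/-- The probability `p_t` that `f (x + t) = f x` for a uniformly random `x`. -/
noncomputable def shiftCollisionProb (f : G → A) (t : G) : ℝ :=
  (Finset.univ.filter fun x => f (x + t) = f x).card / Fintype.card G

theorem shiftCollisionProb_nonneg (f : G → A) (t : G) : 0 ≤ shiftCollisionProb f t := by
  unfold shiftCollisionProb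
  positivity

end ShiftCollision

theorem simon_without_promise_general {n : ℕ} (m : ℕ) {A : Type*} (f : (Fin n → ZMod 2) → A)
    (p₀ : ℝ) (μ : PMF (Fin n → ZMod 2))
    (hμ : ∀ t : Fin n → ZMod 2,
      μ.toMeasure {u | ∑ i, u i * t i = 0} = ENNReal.ofReal ((1 + shiftCollisionProb f t) / 2)) :
    Measure.pi (fun _ : Fin m => μ.toMeasure)
        {v | ∃ t, shiftCollisionProb f t < p₀ ∧ ∀ i, ∑ j, v i j * t j = 0}
      ≤ ENNReal.ofReal (2 ^ n * ((1 + p₀) / 2) ^ m) := by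
  classical
  rcases lt_or_ge p₀ 0 with p₀_neg | p₀_nonneg
  · have no_small_shift (t) : ¬ shiftCollisionProb f t < p₀ :=
      (p₀_neg.le.trans (shiftCollisionProb_nonneg f t)).not_gt
    simp [no_small_shift]
  let S := Finset.univ.filter fun t => shiftCollisionProb f t < p₀
  have card_S_le : S.card ≤ 2 ^ n := S.card_le_univ.trans_eq (by simp)
  have orthogonal_le (t) (ht : t ∈ S) :
      μ.toMeasure {u | ∑ i, u i * t i = 0} ≤ ENNReal.ofReal ((1 + p₀) / 2) := by
    rw [hμ]
    gcongr
    exact (Finset.mem_filter.mp ht).2.le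
  calc Measure.pi (fun _ : Fin m => μ.toMeasure)
        {v | ∃ t, shiftCollisionProb f t < p₀ ∧ ∀ i, ∑ j, v i j * t j = 0}
      ≤ S.card * ENNReal.ofReal ((1 + p₀) / 2) ^ m := by
        simpa [S] using measure_pi_exists_forall_mem_le_card_mul_pow (ι := Fin m) μ.toMeasure S
          (fun t => {u | ∑ i, u i * t i = 0}) orthogonal_le
    _ ≤ 2 ^ n * ENNReal.ofReal ((1 + p₀) / 2) ^ m := by
        gcongr
        exact_mod_cast card_S_le
    _ = ENNReal.ofReal (2 ^ n * ((1 + p₀) / 2) ^ m) := by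
        rw [ENNReal.ofReal_mul (by positivity), ENNReal.ofReal_pow (by positivity),
          ENNReal.ofReal_pow (by positivity), ENNReal.ofReal_ofNat]

open scoped Classical in
/-- Simon's algorithm without promise, probabilistic core:
with `p_t = |{x : f(x+t) = f(x)}|/2^n` and `μ({u : u·t = 0}) = (1+p_t)/2` for all `t`,
the probability that `m = c·n` i.i.d. samples from `μ` are all orthogonal to some `t`
with `p_t < p₀` is at most `2^n · ((1+p₀)/2)^{c·n}`. -/
theorem simon_without_promise (n c : ℕ) (hn : 1 ≤ n) (hc : 1 ≤ c)
    (m : ℕ) (hm : m = c * n)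
    (A : Type*) (f : (Fin n → ZMod 2) → A)
    (p : (Fin n → ZMod 2) → ℝ)
    (hp : ∀ t : Fin n → ZMod 2,
      p t = ((Finset.univ.filter
          (fun x : Fin n → ZMod 2 => f (x + t) = f x)).card : ℝ) / 2 ^ n)
    (p₀ : ℝ) (h0 : 0 ≤ p₀) (h1 : p₀ ≤ 1)
    (μ : PMF (Fin n → ZMod 2))
    (hμ : ∀ t : Fin n → ZMod 2,
      μ.toMeasure {u : Fin n → ZMod 2 | (∑ i, u i * t i) = 0}
        = ENNReal.ofReal ((1 + p t) / 2)) :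
    Measure.pi (fun _ : Fin m => μ.toMeasure)
        {v : Fin m → (Fin n → ZMod 2) |
          ∃ t : Fin n → ZMod 2, p t < p₀ ∧ ∀ i : Fin m, (∑ j, v i j * t j) = 0}
      ≤ ENNReal.ofReal ((2 : ℝ) ^ n * ((1 + p₀) / 2) ^ (c * n)) := by
  obtain rfl : p = shiftCollisionProb f := funext fun t => by simp [hp, shiftCollisionProb]
  exact hm ▸ simon_without_promise_general m f p₀ μ hμ
end

section
/- Let R₁, R₂ : (ZMod 2)^n → (ZMod 2)^n be injective functions, let α₀, α₁ ∈ (ZMod 2)^n with α₀ ≠ α₁, and define f : ZMod 2 × (ZMod 2)^n → (ZMod 2)^n by f(b, x) = R₂(x + R₁(α_b)). Then for all b, b' ∈ ZMod 2 and x, x' ∈ (ZMod 2)^n: f(b', x') = f(b, x) if and only if either (b' = b and x' = x) or (b' ≠ b and x' + x = R₁(α₀) + R₁(α₁)). In particular f satisfies f(b, x) = f(b + 1, x + s') with s' = R₁(α₀) + R₁(α₁), i.e., f satisfies Simon's promise with hidden period s = (1, R₁(α₀) + R₁(α₁)). -/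
/-!
Put `c b = R₁ α_b`. Since `R₂` is injective, `f` has the same collisions as `(b, x) ↦ x + c b`.
On a fibre of the first coordinate this map is a translation, so it is injective there; flipping
`b` shifts it by `c (b + 1) - c b = c (b + 1) + c b`, which is `c 0 + c 1` whatever `b` is.
-/

/-- Simon's promise with hidden period `s`: the collisions of `f` are exactly the pairs of points
that are equal or differ by `s`. Only the translate `z + s` occurs, so the relation is the intended
symmetric one when `2 • s = 0`, as in Simon's problem. -/
def SimonPromise {G W : Type*} [Add G] (f : G → W) (s : G) : Prop :=
  ∀ z z', f z' = f z ↔ z' = z ∨ z' = z + s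

namespace SimonPromise

variable {G W : Type*} [Add G] {f : G → W} {s : G}

theorem map_add_period (h : SimonPromise f s) (z : G) : f (z + s) = f z :=
  (h z (z + s)).mpr (Or.inr rfl)

theorem injective_comp {X : Type*} {g : W → X} (hg : Function.Injective g)
    (h : SimonPromise f s) : SimonPromise (g ∘ f) s :=
  fun z z' => hg.eq_iff.trans (h z z')

end SimonPromise

theorem zmodTwo_ne_iff_eq_add_one {a b : ZMod 2} : a ≠ b ↔ a = b + 1 := by
  revert a b
  decide

theorem zmodTwo_apply_add_apply_add_one {M : Type*} [AddCommMagma M]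
    (c : ZMod 2 → M) (b : ZMod 2) :
    c b + c (b + 1) = c 0 + c 1 := by
  fin_cases b
  · rfl
  · exact add_comm (c 1) (c 0)

section

variable {V W : Type*} [AddCommGroup V] [Module (ZMod 2) V]

theorem simonPromise_snd_add_apply_fst (c : ZMod 2 → V) :
    SimonPromise (fun z : ZMod 2 × V => z.2 + c z.1) (1, c 0 + c 1) := by
  rintro ⟨b, x⟩ ⟨b', x'⟩
  simp only [Prod.mk_add_mk, Prod.mk.injEq]
  obtain rfl | hb := eq_or_ne b' b
  · simp
  · obtain rfl := zmodTwo_ne_iff_eq_add_one.mp hb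
    have shift : x' + c (b + 1) = x + c b ↔ x' = x + (c 0 + c 1) := by
      rw [← eq_sub_iff_add_eq, ZModModule.sub_eq_add, add_assoc,
        zmodTwo_apply_add_apply_add_one]
    simpa using shift

theorem SimonPromise.map_prodMk_eq_iff {f : ZMod 2 × V → W} {s : V} (h : SimonPromise f (1, s))
    (b b' : ZMod 2) (x x' : V) :
    f (b', x') = f (b, x) ↔ (b' = b ∧ x' = x) ∨ (b' ≠ b ∧ x' + x = s) := by
  rw [h, Prod.mk_add_mk, Prod.mk.injEq, Prod.mk.injEq, zmodTwo_ne_iff_eq_add_one,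
    ← ZModModule.sub_eq_add x' x, sub_eq_iff_eq_add']

theorem feistel_simon_promise_general {A : Type*} (R₁ : A → V) {R₂ : V → W}
    (hR₂ : Function.Injective R₂) (α₀ α₁ : A) {f : ZMod 2 × V → W}
    (hf : ∀ (b : ZMod 2) (x : V), f (b, x) = R₂ (x + R₁ (if b = 0 then α₀ else α₁))) :
    (∀ (b b' : ZMod 2) (x x' : V),
      f (b', x') = f (b, x) ↔
        (b' = b ∧ x' = x) ∨ (b' ≠ b ∧ x' + x = R₁ α₀ + R₁ α₁)) ∧
    (∀ (b : ZMod 2) (x : V), f (b, x) = f (b + 1, x + (R₁ α₀ + R₁ α₁))) := by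
  let c : ZMod 2 → V := fun b => R₁ (if b = 0 then α₀ else α₁)
  have f_eq : f = R₂ ∘ fun z => z.2 + c z.1 := funext fun ⟨b, x⟩ => hf b x
  have promise : SimonPromise f (1, R₁ α₀ + R₁ α₁) :=
    f_eq ▸ (simonPromise_snd_add_apply_fst c).injective_comp hR₂
  exact ⟨promise.map_prodMk_eq_iff, fun b x => (promise.map_add_period (b, x)).symm⟩

end

/-- Simon's function `f(b, x) = R₂(x + R₁(α_b))` for the three-round
Feistel attack with injective round functions: `f(b', x') = f(b, x)` iff
`(b' = b ∧ x' = x)` or `(b' ≠ b ∧ x' + x = R₁(α₀) + R₁(α₁))`; in particular `f`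
satisfies Simon's promise with hidden period `(1, R₁(α₀) + R₁(α₁))`. -/
theorem feistel_simon_promise (n : ℕ)
    (R₁ R₂ : (Fin n → ZMod 2) → (Fin n → ZMod 2))
    (hR₁ : Function.Injective R₁) (hR₂ : Function.Injective R₂)
    (α₀ α₁ : Fin n → ZMod 2) (hα : α₀ ≠ α₁)
    (f : ZMod 2 × (Fin n → ZMod 2) → (Fin n → ZMod 2))
    (hf : ∀ (b : ZMod 2) (x : Fin n → ZMod 2),
      f (b, x) = R₂ (x + R₁ (if b = 0 then α₀ else α₁))) :
    (∀ (b b' : ZMod 2) (x x' : Fin n → ZMod 2),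
      f (b', x') = f (b, x) ↔
        (b' = b ∧ x' = x) ∨ (b' ≠ b ∧ x' + x = R₁ α₀ + R₁ α₁)) ∧
    (∀ (b : ZMod 2) (x : Fin n → ZMod 2),
      f (b, x) = f (b + 1, x + (R₁ α₀ + R₁ α₁))) :=
  feistel_simon_promise_general R₁ hR₂ α₀ α₁ hf
end

section
/- Consider the three-round Feistel scheme E on (ZMod 2)^n × (ZMod 2)^n with round functions R₁, R₂, R₃, mapping (x_L, x_R) to (y_L, y_R) via (u₀, v₀) = (x_L, x_R), (u_i, v_i) = (v_{i-1} + R_i(u_{i-1}), u_{i-1}), (y_L, y_R) = (u₃, v₃). Fix α₀, α₁ ∈ (ZMod 2)^n and x ∈ (ZMod 2)^n. Let (y_L, y_R) = E(α₀, x) and (y'_L, y'_R) = E(α₁, x + R₁(α₀) + R₁(α₁)). Then y_R + y'_R = α₀ + α₁. -/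
/-- One round of a Feistel scheme: `(u, v) ↦ (v + R(u), u)`. -/
def feistelRound {n : ℕ} (R : (Fin n → ZMod 2) → (Fin n → ZMod 2))
    (uv : (Fin n → ZMod 2) × (Fin n → ZMod 2)) :
    (Fin n → ZMod 2) × (Fin n → ZMod 2) :=
  (uv.2 + R uv.1, uv.1)

/-- The three-round Feistel scheme with round functions `R₁, R₂, R₃`. -/
def feistel3 {n : ℕ} (R₁ R₂ R₃ : (Fin n → ZMod 2) → (Fin n → ZMod 2))
    (xy : (Fin n → ZMod 2) × (Fin n → ZMod 2)) :
    (Fin n → ZMod 2) × (Fin n → ZMod 2) :=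
  feistelRound R₃ (feistelRound R₂ (feistelRound R₁ xy))

section

variable {n : ℕ} (R₁ R₂ R₃ : (Fin n → ZMod 2) → (Fin n → ZMod 2))

theorem feistel3_snd (u v : Fin n → ZMod 2) :
    (feistel3 R₁ R₂ R₃ (u, v)).2 = u + R₂ (v + R₁ u) :=
  rfl

/-- Under `h` both queries feed the same input to `R₂`, so its two outputs cancel. -/
theorem feistel3_snd_add_snd_of_add_eq_add {u u' v v' : Fin n → ZMod 2}
    (h : v + R₁ u = v' + R₁ u') :
    (feistel3 R₁ R₂ R₃ (u, v)).2 + (feistel3 R₁ R₂ R₃ (u', v')).2 = u + u' := by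
  rw [feistel3_snd, feistel3_snd, ← h, add_comm u', ZModModule.add_add_add_cancel]

end

/-- classical verification step for the Feistel attack. If
`(y_L, y_R) = E(α₀, x)` and `(y'_L, y'_R) = E(α₁, x + R₁(α₀) + R₁(α₁))`,
then `y_R + y'_R = α₀ + α₁`. -/
theorem feistel3_verification (n : ℕ)
    (R₁ R₂ R₃ : (Fin n → ZMod 2) → (Fin n → ZMod 2))
    (α₀ α₁ x : Fin n → ZMod 2) :
    (feistel3 R₁ R₂ R₃ (α₀, x)).2 +
        (feistel3 R₁ R₂ R₃ (α₁, x + R₁ α₀ + R₁ α₁)).2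
      = α₀ + α₁ := by
  have same_input_R₂ : x + R₁ α₀ = x + R₁ α₀ + R₁ α₁ + R₁ α₁ := by
    rw [add_assoc _ (R₁ α₁), ZModModule.add_self, add_zero]
  exact feistel3_snd_add_snd_of_add_eq_add R₁ R₂ R₃ same_input_R₂
end

section
/- Let R₁, R₂ : (ZMod 2)^n → (ZMod 2)^n be arbitrary functions, let α₀, α₁ ∈ (ZMod 2)^n, set s' = R₁(α₀) + R₁(α₁), and define f : ZMod 2 × (ZMod 2)^n → (ZMod 2)^n by f(b, x) = R₂(x + R₁(α_b)). Suppose there exists a pair (τ, t) ∈ ZMod 2 × (ZMod 2)^n with (τ, t) ∉ {(0, 0), (1, s')} such that Pr_{(b,x)}[f(b, x) = f(b + τ, x + t)] > 1/2, where (b, x) is uniform over ZMod 2 × (ZMod 2)^n. Then there exists u ∈ (ZMod 2)^n with u ≠ 0 such that Pr_x[R₂(x) = R₂(x + u)] > 1/2. -/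
/-!
Substituting `y = x + k b` turns `f (b, x) = F (x + k b)` into `F y`, and the shift of `(b, x)` by
`(τ, t)` into the shift of `y` by `t + (k (b + τ) - k b)`. When `k 0 - k 1` is its own negative this
shift does not depend on `b`: it is `t` for `τ = 0` and `t + (k 0 - k 1)` for `τ = 1`. So the
collision probability of `f` at `(τ, t)` equals that of `F` at a single difference, which vanishes
only for the two excluded pairs.
-/

/-- The probability, over a uniform `x`, of the collision `F x = F (x + u)` with input
difference `u`. -/
def collisionProb {G Y : Type*} [Fintype G] [Add G] [DecidableEq Y] (F : G → Y) (u : G) : ℚ≥0 :=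
  Finset.dens {x | F x = F (x + u)}

section CollisionProb

variable {B G H Y : Type*} [Fintype B] [Fintype G] [Fintype H] [DecidableEq Y]

lemma collisionProb_comp_equiv [Add G] [Add H] (e : G ≃ H) (F : H → Y) {u : G} {v : H}
    (he : ∀ x, e (x + u) = e x + v) : collisionProb (F ∘ e) u = collisionProb F v := by
  rw [collisionProb, collisionProb, ← Finset.dens_map_equiv e]
  congr 1
  ext y
  simp [he]

lemma collisionProb_comp_snd [Add B] [Nonempty B] [Add G] (F : G → Y) (τ : B) (u : G) :
    collisionProb (F ∘ Prod.snd) (τ, u) = collisionProb F u := by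
  have filter_eq : ({p : B × G | F p.2 = F (p + (τ, u)).2} : Finset (B × G)) =
      Finset.univ ×ˢ ({x | F x = F (x + u)} : Finset G) := by
    ext p
    simp
  simp only [collisionProb, Function.comp_apply, filter_eq, Finset.dens, Finset.card_product,
    Finset.card_univ, Fintype.card_prod, Nat.cast_mul]
  exact mul_div_mul_left _ _ (Nat.cast_ne_zero.mpr Fintype.card_ne_zero)

lemma collisionProb_shear [Add B] [Nonempty B] [AddCommGroup G] (F : G → Y) {k : B → G} {τ : B}
    {d : G} (hk : ∀ b, k (b + τ) = k b + d) (t : G) :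
    collisionProb (fun p : B × G => F (p.2 + k p.1)) (τ, t) = collisionProb F (t + d) := by
  let shear : B × G ≃ B × G := (Equiv.refl B).prodShear fun b => Equiv.addRight (k b)
  have shear_add (p : B × G) : shear (p + (τ, t)) = shear p + (τ, t + d) := by
    ext
    · rfl
    · change p.2 + t + k (p.1 + τ) = p.2 + k p.1 + (t + d)
      rw [hk]
      abel
  rw [← collisionProb_comp_snd F τ (t + d)]
  exact collisionProb_comp_equiv shear (F ∘ Prod.snd) shear_add

end CollisionProb

lemma apply_add_one_eq_add_sub {G : Type*} [AddCommGroup G] {k : ZMod 2 → G}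
    (hk : 2 • (k 0 - k 1) = 0) (b : ZMod 2) : k (b + 1) = k b + (k 0 - k 1) := by
  have sub_eq_sub : k 0 - k 1 = k 1 - k 0 := by
    rw [← neg_sub (k 0), eq_neg_iff_add_eq_zero, ← two_nsmul, hk]
  fin_cases b
  · change k 1 = k 0 + (k 0 - k 1)
    rw [sub_eq_sub, add_sub_cancel]
  · exact (add_sub_cancel (k 1) (k 0)).symm

theorem feistel_epsilon_bound_general {G Y : Type*} [Fintype G] [AddCommGroup G] [DecidableEq Y]
    (F : G → Y) (k : ZMod 2 → G) (hk : 2 • (k 0 - k 1) = 0) (f : ZMod 2 × G → Y)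
    (hf : ∀ b x, f (b, x) = F (x + k b)) (τ : ZMod 2) (t : G)
    (h_zero : (τ, t) ≠ (0, 0)) (h_period : (τ, t) ≠ (1, k 0 - k 1)) :
    ∃ u ≠ 0, collisionProb F u = collisionProb f (τ, t) := by
  obtain rfl : f = fun p => F (p.2 + k p.1) := funext fun p => hf p.1 p.2
  obtain rfl | rfl := (by decide : ∀ b : ZMod 2, b = 0 ∨ b = 1) τ
  · have ht : t ≠ 0 := by simpa using h_zero
    refine ⟨t + 0, by rwa [add_zero], (collisionProb_shear F (fun b => ?_) t).symm⟩
    rw [add_zero, add_zero]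
  · have ht : t ≠ k 0 - k 1 := by simpa using h_period
    refine ⟨t + (k 0 - k 1), fun hu => ht ?_,
      (collisionProb_shear F (apply_add_one_eq_add_sub hk) t).symm⟩
    rw [eq_neg_of_add_eq_zero_left hu, neg_eq_iff_add_eq_zero, ← two_nsmul, hk]

open scoped Classical in
/-- for the Feistel Simon function `f(b, x) = R₂(x + R₁(α_b))` with
arbitrary round functions, if some `(τ, t) ∉ {(0,0), (1, s')}` (where
`s' = R₁(α₀) + R₁(α₁)`) satisfies `Pr_{(b,x)}[f(b,x) = f(b+τ, x+t)] > 1/2`, then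
`R₂` has a collision differential `u ≠ 0` with `Pr_x[R₂(x) = R₂(x+u)] > 1/2`. -/
theorem feistel_epsilon_bound (n : ℕ)
    (R₁ R₂ : (Fin n → ZMod 2) → (Fin n → ZMod 2))
    (α₀ α₁ : Fin n → ZMod 2)
    (f : ZMod 2 × (Fin n → ZMod 2) → (Fin n → ZMod 2))
    (hf : ∀ (b : ZMod 2) (x : Fin n → ZMod 2),
      f (b, x) = R₂ (x + R₁ (if b = 0 then α₀ else α₁)))
    (h : ∃ (τ : ZMod 2) (t : Fin n → ZMod 2),
      (τ, t) ≠ ((0 : ZMod 2), (0 : Fin n → ZMod 2)) ∧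
      (τ, t) ≠ ((1 : ZMod 2), R₁ α₀ + R₁ α₁) ∧
      ((Finset.univ.filter (fun bx : ZMod 2 × (Fin n → ZMod 2) =>
          f bx = f (bx.1 + τ, bx.2 + t))).card : ℝ)
          / (Fintype.card (ZMod 2 × (Fin n → ZMod 2)) : ℝ) > 1 / 2) :
    ∃ u : Fin n → ZMod 2, u ≠ 0 ∧
      ((Finset.univ.filter (fun x : Fin n → ZMod 2 =>
          R₂ x = R₂ (x + u))).card : ℝ) / 2 ^ n > 1 / 2 := by
  obtain ⟨τ, t, h_zero, h_period, hp⟩ := h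
  let k (b : ZMod 2) := R₁ (if b = 0 then α₀ else α₁)
  have sub_eq_add : k 0 - k 1 = R₁ α₀ + R₁ α₁ := ZModModule.sub_eq_add _ _
  obtain ⟨u, hu, h_eq⟩ := feistel_epsilon_bound_general R₂ k
    (by rw [two_nsmul, ZModModule.add_self]) f hf τ t h_zero (by rwa [sub_eq_add])
  have h_eq_real : (collisionProb R₂ u : ℝ) = collisionProb f (τ, t) := by rw [h_eq]
  simp only [collisionProb, Finset.nnratCast_dens] at h_eq_real
  refine ⟨u, hu, ?_⟩
  have card_eq : (2 : ℝ) ^ n = Fintype.card (Fin n → ZMod 2) := by simp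
  rw [card_eq, h_eq_real]
  exact hp
end

section
/- Let P : (ZMod 2)^n → (ZMod 2)^n be a function, k₁, k₂ ∈ (ZMod 2)^n, and define the Even–Mansour cipher E(x) = P(x + k₁) + k₂ and Simon's function f(x) = E(x) + P(x) = P(x + k₁) + P(x) + k₂. Then: (1) for all x, f(x + k₁) = f(x); and (2) if there exists t ∈ (ZMod 2)^n with t ∉ {0, k₁} such that Pr_x[f(x) = f(x + t)] > 1/2, then Pr_x[P(x) + P(x + k₁) + P(x + t) + P(x + t + k₁) = 0] > 1/2, i.e., P has a higher-order differential that holds with probability greater than 1/2. -/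
/-!
In characteristic two, Simon's function is the derivative `Δ_[k₁] P` translated by the constant
`k₂`. A derivative along `k₁` is `k₁`-periodic in characteristic two, which is (1). For (2), the
constant disappears on differentiating again, so a collision `f x = f (x + t)` is exactly a zero of
the second-order derivative `Δ_[t] (Δ_[k₁] P)` at `x`: the two events coincide, and so do their
probabilities.
-/

section ForwardDifference

open scoped fwdDiff

variable {V W : Type*} [AddCommMonoid V] [AddCommGroup W]

theorem fwdDiff_add_const (h : V) (g : V → W) (c : W) :
    Δ_[h] (fun x ↦ g x + c) = Δ_[h] g :=
  funext fun _ ↦ add_sub_add_right_eq_sub ..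

theorem fwdDiff_apply_eq_zero_iff (h : V) (g : V → W) (x : V) :
    Δ_[h] g x = 0 ↔ g x = g (x + h) :=
  sub_eq_zero.trans eq_comm

variable [Module (ZMod 2) W]

theorem fwdDiff_apply_eq_add (h : V) (g : V → W) (x : V) :
    Δ_[h] g x = g x + g (x + h) :=
  (ZModModule.sub_eq_add ..).trans (add_comm ..)

theorem fwdDiff_fwdDiff_apply_eq_add (h k : V) (g : V → W) (x : V) :
    Δ_[h] (Δ_[k] g) x = g x + g (x + k) + g (x + h) + g (x + h + k) := by
  simp only [fwdDiff_apply_eq_add, add_assoc]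

theorem fwdDiff_periodic {k : V} (hk : k + k = 0) (g : V → W) :
    Function.Periodic (Δ_[k] g) k := fun x ↦ by
  rw [fwdDiff_apply_eq_add, fwdDiff_apply_eq_add, add_assoc, hk, add_zero, add_comm]

end ForwardDifference

section Simon

open scoped fwdDiff

variable {V W : Type*}

/-- The one-round Even–Mansour cipher with permutation `P`, whitened by the key `k₁` before and by
`k₂` after `P`. Bijectivity of `P` is not imposed. -/
def evenMansour [Add V] [Add W] (P : V → W) (k₁ : V) (k₂ : W) (x : V) : W :=
  P (x + k₁) + k₂

/-- The function to which Simon's algorithm is applied in order to recover the key `k₁` of the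
Even–Mansour cipher built on `P`. -/
def simonFunction [Add V] [Add W] (P : V → W) (k₁ : V) (k₂ : W) (x : V) : W :=
  evenMansour P k₁ k₂ x + P x

variable [AddCommMonoid V] [AddCommGroup W] [Module (ZMod 2) W]

theorem simonFunction_eq_fwdDiff_add_const (P : V → W) (k₁ : V) (k₂ : W) :
    simonFunction P k₁ k₂ = fun x ↦ Δ_[k₁] P x + k₂ := funext fun x ↦ by
  rw [fwdDiff_apply_eq_add, simonFunction, evenMansour, add_right_comm, add_comm (P x)]

theorem simonFunction_periodic (P : V → W) {k₁ : V} (hk₁ : k₁ + k₁ = 0) (k₂ : W) :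
    Function.Periodic (simonFunction P k₁ k₂) k₁ := by
  rw [simonFunction_eq_fwdDiff_add_const]
  exact (fwdDiff_periodic hk₁ P).comp (· + k₂)

theorem simonFunction_eq_simonFunction_add_iff (P : V → W) (k₁ : V) (k₂ : W) (t x : V) :
    simonFunction P k₁ k₂ x = simonFunction P k₁ k₂ (x + t) ↔
      P x + P (x + k₁) + P (x + t) + P (x + t + k₁) = 0 := by
  rw [← fwdDiff_apply_eq_zero_iff, simonFunction_eq_fwdDiff_add_const, fwdDiff_add_const,
    fwdDiff_fwdDiff_apply_eq_add]

theorem even_mansour_simon_general (P : V → W) {k₁ : V} (hk₁ : k₁ + k₁ = 0) (k₂ : W)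
    (E f : V → W) (hE : ∀ x, E x = P (x + k₁) + k₂) (hf : ∀ x, f x = E x + P x) :
    (∀ x, f (x + k₁) = f x) ∧
    (∀ t x, f x = f (x + t) ↔ P x + P (x + k₁) + P (x + t) + P (x + t + k₁) = 0) := by
  obtain rfl : E = evenMansour P k₁ k₂ := funext hE
  obtain rfl : f = simonFunction P k₁ k₂ := funext hf
  exact ⟨simonFunction_periodic P hk₁ k₂, simonFunction_eq_simonFunction_add_iff P k₁ k₂⟩

end Simon

open scoped Classical in
/-- for the Even–Mansour cipher `E(x) = P(x + k₁) + k₂` and Simon's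
function `f(x) = E(x) + P(x)`: (1) `f(x + k₁) = f(x)` for all `x`; (2) if some
`t ∉ {0, k₁}` satisfies `Pr_x[f(x) = f(x+t)] > 1/2`, then
`Pr_x[P(x) + P(x+k₁) + P(x+t) + P(x+t+k₁) = 0] > 1/2`. -/
theorem even_mansour_simon (n : ℕ)
    (P : (Fin n → ZMod 2) → (Fin n → ZMod 2)) (k₁ k₂ : Fin n → ZMod 2)
    (E f : (Fin n → ZMod 2) → (Fin n → ZMod 2))
    (hE : ∀ x, E x = P (x + k₁) + k₂)
    (hfdef : ∀ x, f x = E x + P x) :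
    (∀ x, f (x + k₁) = f x) ∧
    (∀ t : Fin n → ZMod 2, t ≠ 0 → t ≠ k₁ →
      ((Finset.univ.filter (fun x : Fin n → ZMod 2 =>
          f x = f (x + t))).card : ℝ) / 2 ^ n > 1 / 2 →
      ((Finset.univ.filter (fun x : Fin n → ZMod 2 =>
          P x + P (x + k₁) + P (x + t) + P (x + t + k₁) = 0)).card : ℝ) / 2 ^ n
        > 1 / 2) := by
  obtain ⟨hperiod, hcollision⟩ :=
    even_mansour_simon_general P (ZModModule.add_self k₁) k₂ E f hE hfdef
  exact ⟨hperiod, fun t _ _ h ↦ by simpa only [hcollision] using h⟩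
end

section
/- Let E : (ZMod 2)^n → (ZMod 2)^n be a function, let h₀, h₁ ∈ (ZMod 2)^n (the hash values h(t₀), h(t₁) of two fixed tweaks in the LRW construction Ẽ_t(x) = E(x + h(t)) + h(t)), set s = h₀ + h₁, and define f : (ZMod 2)^n → (ZMod 2)^n by f(x) = E(x + h₀) + h₀ + E(x + h₁) + h₁. Then: (1) for all x, f(x + s) = f(x); and (2) if there exists t ∈ (ZMod 2)^n with t ∉ {0, s} such that Pr_x[f(x) = f(x + t)] > 1/2, then Pr_x[E(x) + E(x + s) + E(x + t) + E(x + t + s) = 0] > 1/2, i.e., E has a higher-order differential that holds with probability greater than 1/2. -/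
/-!
The LRW Simon function is, up to an additive constant, the translate by `h₀` of the first
difference of `E` in direction `s = h₀ + h₁`. Its own difference in direction `t` is therefore a
translate of the second difference of `E` in directions `s` and `t`. For `t = s` this vanishes
because `E` is a map between groups of exponent two; for other `t`, translation preserves the
uniform distribution, so collisions of the Simon function and zeros of the second difference
are equally likely.
-/

open Finset fwdDiff

section FwdDiff

variable {M G : Type*} [AddCommGroup G] [Module (ZMod 2) G]

lemma fwdDiff_fwdDiff_eq_add [AddCommMonoid M] (g : M → G) (s t x : M) :
    Δ_[t] (Δ_[s] g) x = g x + g (x + s) + g (x + t) + g (x + t + s) := by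
  simp only [fwdDiff, ZModModule.sub_eq_add]
  abel

lemma fwdDiff_fwdDiff_self [AddCommGroup M] [Module (ZMod 2) M] (g : M → G) (s x : M) :
    Δ_[s] (Δ_[s] g) x = 0 := by
  have shift_twice : x + s + s = x := by rw [add_assoc, ZModModule.add_self, add_zero]
  rw [fwdDiff, fwdDiff, fwdDiff, shift_twice, ← neg_sub (g (x + s)), ZModModule.neg_eq_self,
    sub_self]

end FwdDiff

section LRW

variable {G : Type*} [AddCommGroup G]

/-- The LRW tweakable block cipher built from `E`, with the tweak represented by its hash
value `h`. -/
def lrwCipher (E : G → G) (h x : G) : G := E (x + h) + h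

/-- The function to which Simon's algorithm is applied in the attack on LRW: the sum of the
encryptions of one message under two tweaks with hash values `h₀` and `h₁`. -/
def lrwSimonFunction (E : G → G) (h₀ h₁ x : G) : G := lrwCipher E h₀ x + lrwCipher E h₁ x

variable [Module (ZMod 2) G] (E : G → G) (h₀ h₁ : G)

lemma lrwSimonFunction_eq_fwdDiff_add (x : G) :
    lrwSimonFunction E h₀ h₁ x = Δ_[h₀ + h₁] E (x + h₀) + (h₀ + h₁) := by
  have shift : x + h₀ + (h₀ + h₁) = x + h₁ := by
    rw [add_assoc, ← add_assoc h₀, ZModModule.add_self, zero_add]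
  simp only [lrwSimonFunction, lrwCipher, fwdDiff, shift, ZModModule.sub_eq_add]
  abel

lemma fwdDiff_lrwSimonFunction (t x : G) :
    Δ_[t] (lrwSimonFunction E h₀ h₁) x = Δ_[t] (Δ_[h₀ + h₁] E) (x + h₀) := by
  rw [fwdDiff, lrwSimonFunction_eq_fwdDiff_add, lrwSimonFunction_eq_fwdDiff_add,
    add_sub_add_right_eq_sub, add_right_comm, ← fwdDiff]

lemma lrwSimonFunction_add_period (x : G) :
    lrwSimonFunction E h₀ h₁ (x + (h₀ + h₁)) = lrwSimonFunction E h₀ h₁ x := by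
  rw [← sub_eq_zero, ← fwdDiff, fwdDiff_lrwSimonFunction, fwdDiff_fwdDiff_self]

lemma lrwSimonFunction_eq_add_iff (t x : G) :
    lrwSimonFunction E h₀ h₁ x = lrwSimonFunction E h₀ h₁ (x + t) ↔
      Δ_[t] (Δ_[h₀ + h₁] E) (x + h₀) = 0 := by
  rw [← fwdDiff_lrwSimonFunction, fwdDiff, sub_eq_zero, eq_comm]

lemma card_lrwSimonFunction_eq_add [Fintype G] [DecidableEq G] (t : G) :
    #{x | lrwSimonFunction E h₀ h₁ x = lrwSimonFunction E h₀ h₁ (x + t)} =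
      #{x | Δ_[t] (Δ_[h₀ + h₁] E) x = 0} :=
  card_equiv (Equiv.addRight h₀) fun x => by
    simp only [mem_filter_univ, lrwSimonFunction_eq_add_iff, Equiv.coe_addRight]

theorem lrw_simon_general [Fintype G] [DecidableEq G] (s : G) (hs : s = h₀ + h₁)
    (f : G → G) (hf : ∀ x, f x = E (x + h₀) + h₀ + E (x + h₁) + h₁) :
    (∀ x, f (x + s) = f x) ∧
      ∀ t, #{x | f x = f (x + t)} = #{x | E x + E (x + s) + E (x + t) + E (x + t + s) = 0} := by
  obtain rfl : f = lrwSimonFunction E h₀ h₁ := funext fun x => (hf x).trans (add_assoc _ _ _)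
  subst hs
  refine ⟨lrwSimonFunction_add_period E h₀ h₁, fun t => ?_⟩
  simp only [card_lrwSimonFunction_eq_add, fwdDiff_fwdDiff_eq_add]

end LRW

open scoped Classical in
/-- for the LRW Simon function
`f(x) = E(x + h₀) + h₀ + E(x + h₁) + h₁` with `s = h₀ + h₁`:
(1) `f(x + s) = f(x)` for all `x`; (2) if some `t ∉ {0, s}` satisfies
`Pr_x[f(x) = f(x+t)] > 1/2`, then
`Pr_x[E(x) + E(x+s) + E(x+t) + E(x+t+s) = 0] > 1/2`. -/
theorem lrw_simon (n : ℕ)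
    (E : (Fin n → ZMod 2) → (Fin n → ZMod 2)) (h₀ h₁ : Fin n → ZMod 2)
    (s : Fin n → ZMod 2) (hs : s = h₀ + h₁)
    (f : (Fin n → ZMod 2) → (Fin n → ZMod 2))
    (hfdef : ∀ x, f x = E (x + h₀) + h₀ + E (x + h₁) + h₁) :
    (∀ x, f (x + s) = f x) ∧
    (∀ t : Fin n → ZMod 2, t ≠ 0 → t ≠ s →
      ((Finset.univ.filter (fun x : Fin n → ZMod 2 =>
          f x = f (x + t))).card : ℝ) / 2 ^ n > 1 / 2 →
      ((Finset.univ.filter (fun x : Fin n → ZMod 2 =>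
          E x + E (x + s) + E (x + t) + E (x + t + s) = 0)).card : ℝ) / 2 ^ n
        > 1 / 2) :=
  let ⟨period, card_eq⟩ := lrw_simon_general E h₀ h₁ s hs f hfdef
  ⟨period, fun t _ _ ht => card_eq t ▸ ht⟩
end

section
/- Let E, E' : (ZMod 2)^n → (ZMod 2)^n be injective functions, let α₀, α₁ ∈ (ZMod 2)^n with α₀ ≠ α₁, and define f : ZMod 2 × (ZMod 2)^n → (ZMod 2)^n by f(b, x) = E'(E(x + E(α_b))). (This is f(b, x) = CBC-MAC(α_b ‖ x) for encrypted CBC-MAC with block cipher E and finalization cipher E'.) Then for all b, b' ∈ ZMod 2 and x, x' ∈ (ZMod 2)^n: f(b', x') = f(b, x) if and only if either (b' = b and x' = x) or (b' ≠ b and x' + x = E(α₀) + E(α₁)). In particular, f satisfies Simon's promise with hidden period s = (1, E(α₀) + E(α₁)). -/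
/-!
Since `E' ∘ E` is injective, `f (b', x') = f (b, x)` amounts to `x' + k b' = x + k b` with
`k b = E (α_b)`, that is, in characteristic two, to `x' + x = k b' + k b`. The right-hand side
vanishes for `b' = b` and is `k 0 + k 1` for `b' ≠ b`, because `{b', b} = {0, 1}`.
-/

section

variable {V : Type*} [AddCommGroup V] [Module (ZMod 2) V]

theorem add_eq_add_iff_add_eq_add_of_zmodModule_two (x x' u u' : V) :
    x' + u' = x + u ↔ x' + x = u' + u := by
  rw [add_comm x u, ← sub_eq_sub_iff_add_eq_add, ZModModule.sub_eq_add, ZModModule.sub_eq_add,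
    add_comm u u']

theorem zmod_two_apply_add_apply_of_ne {M : Type*} [AddCommMagma M] (k : ZMod 2 → M)
    {b b' : ZMod 2} (h : b' ≠ b) : k b' + k b = k 0 + k 1 := by
  fin_cases b <;> fin_cases b'
  · exact absurd rfl h
  · exact add_comm (k 1) (k 0)
  · rfl
  · exact absurd rfl h

theorem add_apply_eq_add_apply_iff_of_zmodModule_two (k : ZMod 2 → V) (b b' : ZMod 2) (x x' : V) :
    x' + k b' = x + k b ↔ (b' = b ∧ x' = x) ∨ (b' ≠ b ∧ x' + x = k 0 + k 1) := by
  obtain rfl | h := eq_or_ne b' b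
  · simp
  · rw [add_eq_add_iff_add_eq_add_of_zmodModule_two, zmod_two_apply_add_apply_of_ne k h]
    simp [h]

theorem cbcmac_simon_promise_general {W : Type*} (E : V → V) (E' : V → W)
    (hE : Function.Injective (E' ∘ E)) (α : ZMod 2 → V) (f : ZMod 2 × V → W)
    (hf : ∀ (b : ZMod 2) (x : V), f (b, x) = E' (E (x + E (α b)))) :
    (∀ (b b' : ZMod 2) (x x' : V),
      f (b', x') = f (b, x) ↔
        (b' = b ∧ x' = x) ∨ (b' ≠ b ∧ x' + x = E (α 0) + E (α 1))) ∧
    (∀ (b : ZMod 2) (x : V), f (b, x) = f (b + 1, x + (E (α 0) + E (α 1)))) := by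
  have collision_iff (b b' : ZMod 2) (x x' : V) : f (b', x') = f (b, x) ↔
      (b' = b ∧ x' = x) ∨ (b' ≠ b ∧ x' + x = E (α 0) + E (α 1)) := by
    rw [hf, hf]
    exact hE.eq_iff.trans (add_apply_eq_add_apply_iff_of_zmodModule_two (fun c ↦ E (α c)) b b' x x')
  refine ⟨collision_iff, fun b x ↦ ((collision_iff b (b + 1) x _).2 (.inr ⟨?_, ?_⟩)).symm⟩
  · exact add_ne_left.2 one_ne_zero
  · rw [add_right_comm, ZModModule.add_self, zero_add]

end

/-- Simon's function for encrypted CBC-MAC,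
`f(b, x) = E'(E(x + E(α_b)))` with `E, E'` injective: `f(b', x') = f(b, x)` iff
`(b' = b ∧ x' = x)` or `(b' ≠ b ∧ x' + x = E(α₀) + E(α₁))`; in particular `f`
satisfies Simon's promise with hidden period `(1, E(α₀) + E(α₁))`. -/
theorem cbcmac_simon_promise (n : ℕ)
    (E E' : (Fin n → ZMod 2) → (Fin n → ZMod 2))
    (hE : Function.Injective E) (hE' : Function.Injective E')
    (α₀ α₁ : Fin n → ZMod 2) (hα : α₀ ≠ α₁)
    (f : ZMod 2 × (Fin n → ZMod 2) → (Fin n → ZMod 2))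
    (hf : ∀ (b : ZMod 2) (x : Fin n → ZMod 2),
      f (b, x) = E' (E (x + E (if b = 0 then α₀ else α₁)))) :
    (∀ (b b' : ZMod 2) (x x' : Fin n → ZMod 2),
      f (b', x') = f (b, x) ↔
        (b' = b ∧ x' = x) ∨ (b' ≠ b ∧ x' + x = E α₀ + E α₁)) ∧
    (∀ (b : ZMod 2) (x : Fin n → ZMod 2),
      f (b, x) = f (b + 1, x + (E α₀ + E α₁))) :=
  cbcmac_simon_promise_general E E' (hE'.comp hE) (fun b ↦ if b = 0 then α₀ else α₁) f hf
end

section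
/- Let F be a field of characteristic 2 (e.g. GF(2^n)), let H ∈ F with H ≠ 0, let α₀, α₁ ∈ F with α₀ ≠ α₁, let c ∈ F, and define f : ZMod 2 × F → F by f(b, x) = α_b·H² + x·H + c. (This is f(b, x) = GMAC(N, α_b ‖ x) with hash key H and mask c = E_k(N ‖ 1).) Then for all b, b' ∈ ZMod 2 and x, x' ∈ F: f(b', x') = f(b, x) if and only if either (b' = b and x' = x) or (b' ≠ b and x' + x = (α₀ + α₁)·H). In particular, f satisfies Simon's promise with hidden period s = (1, (α₀ + α₁)·H). -/
/-!
By Horner's rule the tag is `(α_b·H + x)·H + c`. Cancelling `c` and then the regular element `H`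
turns a collision into a condition on `x' - x` alone, and for `b' ≠ b` the sum `α_b + α_b'` is
always `α₀ + α₁`, so the shift of `x` is the same for every collision between different bits.
-/

/-- The GMAC tag of the two-block message `m₁ ‖ m₂`, with hash key `H = E_k(0)` and mask
`c = E_k(N ‖ 1)`. Both are plain ring elements, so the block cipher and the nonce do not appear. -/
def gmacTag {R : Type*} [Semiring R] (H c m₁ m₂ : R) : R :=
  m₁ * H ^ 2 + m₂ * H + c

lemma gmacTag_eq_horner {R : Type*} [Semiring R] (H c m₁ m₂ : R) :
    gmacTag H c m₁ m₂ = (m₁ * H + m₂) * H + c := by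
  rw [gmacTag, add_mul, mul_assoc, sq]

lemma gmacTag_eq_gmacTag_iff_sub_eq {R : Type*} [Ring R] {H : R} (hH : IsRightRegular H)
    (c a a' x x' : R) :
    gmacTag H c a' x' = gmacTag H c a x ↔ x' - x = (a - a') * H := by
  calc gmacTag H c a' x' = gmacTag H c a x
      ↔ (a' * H + x') * H = (a * H + x) * H := by
        rw [gmacTag_eq_horner, gmacTag_eq_horner, add_left_inj]
    _ ↔ a' * H + x' = a * H + x := hH.eq_iff
    _ ↔ x' - x = (a - a') * H := by
        rw [sub_mul, sub_eq_sub_iff_add_eq_add, add_comm x']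

lemma gmacTag_eq_gmacTag_iff_add_eq {R : Type*} [Ring R] [CharP R 2] {H : R}
    (hH : IsRightRegular H) (c a a' x x' : R) :
    gmacTag H c a' x' = gmacTag H c a x ↔ x' + x = (a + a') * H := by
  rw [gmacTag_eq_gmacTag_iff_sub_eq hH, CharTwo.sub_eq_add, CharTwo.sub_eq_add]

lemma apply_add_apply_of_ne {M : Type*} [AddCommMagma M] (α : ZMod 2 → M) {b b' : ZMod 2}
    (h : b' ≠ b) : α b + α b' = α 0 + α 1 := by
  have hbits : b = 0 ∧ b' = 1 ∨ b = 1 ∧ b' = 0 := by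
    decide +revert
  obtain ⟨rfl, rfl⟩ | ⟨rfl, rfl⟩ := hbits
  · rfl
  · exact add_comm _ _

theorem gmac_simon_promise_general {R : Type*} [Ring R] [CharP R 2] {H : R}
    (hH : IsRightRegular H) (α : ZMod 2 → R) (c : R) (f : ZMod 2 × R → R)
    (hf : ∀ (b : ZMod 2) (x : R), f (b, x) = gmacTag H c (α b) x) :
    (∀ (b b' : ZMod 2) (x x' : R),
      f (b', x') = f (b, x) ↔
        (b' = b ∧ x' = x) ∨ (b' ≠ b ∧ x' + x = (α 0 + α 1) * H)) ∧
    (∀ (b : ZMod 2) (x : R),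
      f (b, x) = f (b + 1, x + (α 0 + α 1) * H)) := by
  have collision_iff : ∀ (b b' : ZMod 2) (x x' : R), f (b', x') = f (b, x) ↔
      (b' = b ∧ x' = x) ∨ (b' ≠ b ∧ x' + x = (α 0 + α 1) * H) := by
    intro b b' x x'
    rw [hf, hf, gmacTag_eq_gmacTag_iff_add_eq hH]
    obtain rfl | hne := eq_or_ne b' b
    · simp [CharTwo.add_self_eq_zero, CharTwo.add_eq_zero]
    · simp [hne, apply_add_apply_of_ne α hne]
  refine ⟨collision_iff, fun b x ↦ (collision_iff _ _ _ _).mpr (Or.inr ⟨by simp, ?_⟩)⟩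
  rw [← add_assoc, CharTwo.add_self_eq_zero, zero_add]

/-- Simon's function for GMAC, `f(b, x) = α_b·H² + x·H + c` over a
field `F` of characteristic 2, with `H ≠ 0` and `α₀ ≠ α₁`: `f(b', x') = f(b, x)` iff
`(b' = b ∧ x' = x)` or `(b' ≠ b ∧ x' + x = (α₀ + α₁)·H)`; in particular `f`
satisfies Simon's promise with hidden period `(1, (α₀ + α₁)·H)`. -/
theorem gmac_simon_promise (F : Type*) [Field F] [CharP F 2]
    (H : F) (hH : H ≠ 0) (α₀ α₁ : F) (hα : α₀ ≠ α₁) (c : F)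
    (f : ZMod 2 × F → F)
    (hf : ∀ (b : ZMod 2) (x : F),
      f (b, x) = (if b = 0 then α₀ else α₁) * H ^ 2 + x * H + c) :
    (∀ (b b' : ZMod 2) (x x' : F),
      f (b', x') = f (b, x) ↔
        (b' = b ∧ x' = x) ∨ (b' ≠ b ∧ x' + x = (α₀ + α₁) * H)) ∧
    (∀ (b : ZMod 2) (x : F),
      f (b, x) = f (b + 1, x + (α₀ + α₁) * H)) :=
  gmac_simon_promise_general (IsRegular.of_ne_zero hH).right
    (fun b ↦ if b = 0 then α₀ else α₁) c f hf
end

section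
/- (Simon promise for slide attacks.) Let E, P : (ZMod 2)^n → (ZMod 2)^n be functions and k ∈ (ZMod 2)^n, and suppose the slide property holds: for all x, P(E(x)) + k = E(P(x + k)). Define f : ZMod 2 × (ZMod 2)^n → (ZMod 2)^n by f(0, x) = P(E(x)) + x and f(1, x) = E(P(x)) + x. Then for all b ∈ ZMod 2 and x ∈ (ZMod 2)^n, f(b, x) = f(b + 1, x + k); i.e., f is periodic with period s = (1, k). -/
/-!
The slide property says that translation by `k` semiconjugates `P ∘ E` to `E ∘ P`. Passing from
`(0, x)` to `(1, x + k)` thus adds `k` twice to the value of `f`, once through this semiconjugacy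
and once through the summand `x`, and the two cancel.
-/

theorem periodic_one_prodMk {G α : Type*} [AddMonoid G] {k : G} {f : ZMod 2 × G → α}
    (hk : k + k = 0) (hf : ∀ x, f (0, x) = f (1, x + k)) : Function.Periodic f (1, k) := by
  rintro ⟨b, x⟩
  obtain rfl | rfl : b = 0 ∨ b = 1 := by decide +revert
  · calc f ((0, x) + (1, k)) = f (1, x + k) := by rw [Prod.mk_add_mk, zero_add]
      _ = f (0, x) := (hf x).symm
  · calc f ((1, x) + (1, k)) = f (0, x + k) := by rw [Prod.mk_add_mk, CharTwo.add_self_eq_zero]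
      _ = f (1, x + k + k) := hf (x + k)
      _ = f (1, x) := by rw [add_assoc, hk, add_zero]

theorem add_eq_add_of_semiconj_add_right {G : Type*} [AddCommMonoid G] {k : G} {u v : G → G}
    (hk : k + k = 0) (huv : Function.Semiconj (· + k) u v) (x : G) :
    u x + x = v (x + k) + (x + k) :=
  calc u x + x = (u x + x) + (k + k) := by rw [hk, add_zero]
    _ = (u x + k) + (x + k) := add_add_add_comm (u x) x k k
    _ = v (x + k) + (x + k) := congrArg (· + (x + k)) (huv x)

theorem slide_simon_promise_general {G : Type*} [AddCommMonoid G] {k : G} {u v : G → G}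
    (hk : k + k = 0) (huv : Function.Semiconj (· + k) u v) {f : ZMod 2 × G → G}
    (hf0 : ∀ x, f (0, x) = u x + x) (hf1 : ∀ x, f (1, x) = v x + x) :
    Function.Periodic f (1, k) :=
  periodic_one_prodMk hk fun x => by
    rw [hf0, hf1, add_eq_add_of_semiconj_add_right hk huv]

/-- Simon promise for slide attacks: if the slide property
`P(E(x)) + k = E(P(x + k))` holds for all `x`, then the function
`f(0, x) = P(E(x)) + x`, `f(1, x) = E(P(x)) + x` satisfies
`f(b, x) = f(b + 1, x + k)` for all `b, x`, i.e. `f` is periodic with period `(1, k)`. -/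
theorem slide_simon_promise (n : ℕ)
    (E P : (Fin n → ZMod 2) → (Fin n → ZMod 2)) (k : Fin n → ZMod 2)
    (hslide : ∀ x, P (E x) + k = E (P (x + k)))
    (f : ZMod 2 × (Fin n → ZMod 2) → (Fin n → ZMod 2))
    (hf0 : ∀ x, f (0, x) = P (E x) + x)
    (hf1 : ∀ x, f (1, x) = E (P x) + x) :
    ∀ (b : ZMod 2) (x : Fin n → ZMod 2), f (b, x) = f (b + 1, x + k) :=
  fun b x => (slide_simon_promise_general (u := P ∘ E) (v := E ∘ P)
    (ZModModule.add_self k) hslide hf0 hf1 (b, x)).symm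
end

section
/- (Minalpher collision structure.) Let P : (ZMod 2)^n → (ZMod 2)^n be injective, let φ : (ZMod 2)^n → (ZMod 2)^n be injective, let Δ ∈ (ZMod 2)^n, let α₀, α₁ ∈ (ZMod 2)^n with α₀ ≠ α₁, and define f : ZMod 2 × (ZMod 2)^n → (ZMod 2)^n by f(b, x) = φ(P(α_b + Δ) + Δ + x). Then for all b, b' ∈ ZMod 2 and x, x' ∈ (ZMod 2)^n: f(b', x') = f(b, x) if and only if either (b' = b and x' = x) or (b' ≠ b and x' + x = P(α₀ + Δ) + P(α₁ + Δ)). In particular, f satisfies Simon's promise with hidden period s = (1, P(α₀ + Δ) + P(α₁ + Δ)), and s is independent of φ. -/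
/-!
Write `f (b, x) = φ (a b + x)` with `a b = P (α_b + Δ) + Δ`. Since `φ` is injective and addition has
exponent two, `f (b', x') = f (b, x)` means `x' + x = a b' + a b`. The right-hand side is `0` for
`b' = b` and `a 0 + a 1` for `b' ≠ b`, and the outer masks `Δ` cancel in `a 0 + a 1`.
-/

theorem apply_add_apply_eq_zero_add_one_of_ne {M : Type*} [AddCommMagma M] (a : ZMod 2 → M)
    {b b' : ZMod 2} (hb : b ≠ b') : a b + a b' = a 0 + a 1 := by
  fin_cases b <;> fin_cases b'
  · exact absurd rfl hb
  · rfl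
  · exact add_comm _ _
  · exact absurd rfl hb

section ExponentTwo

variable {V X : Type*} [AddCommGroup V] [Module (ZMod 2) V]

theorem add_eq_add_iff_add_eq_add_of_zmod_two (u v x y : V) : u + x = v + y ↔ x + y = u + v := by
  rw [add_comm v y, ← sub_eq_sub_iff_add_eq_add, ZModModule.sub_eq_add, ZModModule.sub_eq_add,
    add_comm y x, eq_comm]

theorem apply_add_eq_apply_add_iff {φ : V → X} (hφ : Function.Injective φ) (a : ZMod 2 → V)
    (b b' : ZMod 2) (x x' : V) :
    φ (a b' + x') = φ (a b + x) ↔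
      (b' = b ∧ x' = x) ∨ (b' ≠ b ∧ x' + x = a 0 + a 1) := by
  rw [hφ.eq_iff]
  by_cases hb : b' = b
  · simp [hb]
  · rw [add_eq_add_iff_add_eq_add_of_zmod_two, apply_add_apply_eq_zero_add_one_of_ne a hb]
    simp [hb]

theorem periodic_apply_add (φ : V → X) (a : ZMod 2 → V) :
    Function.Periodic (fun z : ZMod 2 × V => φ (a z.1 + z.2)) (1, a 0 + a 1) := by
  rintro ⟨b, x⟩
  refine congrArg φ ((add_eq_add_iff_add_eq_add_of_zmod_two _ _ _ _).mpr ?_)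
  calc x + (a 0 + a 1) + x = a 0 + a 1 := by
        rw [add_right_comm, ZModModule.add_self, zero_add]
    _ = a (b + 1) + a b := (apply_add_apply_eq_zero_add_one_of_ne a (by simp)).symm

theorem minalpher_simon_promise_general (P : V → V) {φ : V → X} (hφ : Function.Injective φ)
    (Δ α₀ α₁ : V) (f : ZMod 2 × V → X)
    (hf : ∀ (b : ZMod 2) (x : V), f (b, x) = φ (P ((if b = 0 then α₀ else α₁) + Δ) + Δ + x)) :
    (∀ (b b' : ZMod 2) (x x' : V),
      f (b', x') = f (b, x) ↔
        (b' = b ∧ x' = x) ∨ (b' ≠ b ∧ x' + x = P (α₀ + Δ) + P (α₁ + Δ))) ∧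
    (∀ (b : ZMod 2) (x : V), f (b, x) = f (b + 1, x + (P (α₀ + Δ) + P (α₁ + Δ)))) := by
  let a : ZMod 2 → V := fun b => P ((if b = 0 then α₀ else α₁) + Δ) + Δ
  have hfa : f = fun z => φ (a z.1 + z.2) := funext fun z => hf z.1 z.2
  have masks_cancel : P (α₀ + Δ) + P (α₁ + Δ) = a 0 + a 1 := by
    simp only [a, if_true, one_ne_zero, if_false]
    rw [add_comm (P (α₁ + Δ)), ZModModule.add_add_add_cancel]
  rw [masks_cancel, hfa]
  exact ⟨apply_add_eq_apply_add_iff hφ a, fun b x => (periodic_apply_add φ a (b, x)).symm⟩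

end ExponentTwo

/-- Minalpher collision structure: for
`f(b, x) = φ(P(α_b + Δ) + Δ + x)` with `P, φ` injective and `α₀ ≠ α₁`:
`f(b', x') = f(b, x)` iff `(b' = b ∧ x' = x)` or
`(b' ≠ b ∧ x' + x = P(α₀ + Δ) + P(α₁ + Δ))`; in particular `f` satisfies Simon's
promise with hidden period `(1, P(α₀ + Δ) + P(α₁ + Δ))`. -/
theorem minalpher_simon_promise (n : ℕ)
    (P φ : (Fin n → ZMod 2) → (Fin n → ZMod 2))
    (hP : Function.Injective P) (hφ : Function.Injective φ)
    (Δ : Fin n → ZMod 2) (α₀ α₁ : Fin n → ZMod 2) (hα : α₀ ≠ α₁)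
    (f : ZMod 2 × (Fin n → ZMod 2) → (Fin n → ZMod 2))
    (hf : ∀ (b : ZMod 2) (x : Fin n → ZMod 2),
      f (b, x) = φ (P ((if b = 0 then α₀ else α₁) + Δ) + Δ + x)) :
    (∀ (b b' : ZMod 2) (x x' : Fin n → ZMod 2),
      f (b', x') = f (b, x) ↔
        (b' = b ∧ x' = x) ∨ (b' ≠ b ∧ x' + x = P (α₀ + Δ) + P (α₁ + Δ))) ∧
    (∀ (b : ZMod 2) (x : Fin n → ZMod 2),
      f (b, x) = f (b + 1, x + (P (α₀ + Δ) + P (α₁ + Δ)))) :=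
  minalpher_simon_promise_general P hφ Δ α₀ α₁ f hf
end
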